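/- Let N be a positive integer, E ⊆ D(N), p a prime dividing N, and c ∈ D(N/p). Then a_c^p(E_p) = a_c(E) if pc divides N/p, and a_c^p(E_p) = ((p−1)·a_c(E) + a_{pc}(E))/p otherwise. In particular, if a_c(E) ≥ 0 for all c ∈ D(N), then a_c^p(E_p) ≥ 0 for all c ∈ D(N/p). -/

import Mathlib

/-!
For `d ∣ N` one has `N / gcd(N, dc) = q / gcd(q, c)` with `q = N / d`, so by Hölder's formula the
summand of `a_c(E)` at `d` is the Ramanujan sum `c_q(c)`, and the summand of `a_c^p(E_p)` at `d / p`
is the same `c_q(c)`, because `(N / p) / (d / p) = N / d`. Hence `a_c^p(E_p)` is the part of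
`a_c(E)` with `p ∣ d`.

The behaviour of `c_q(n)` under `n ↦ pn` is governed by how often `p` divides `r = q / gcd(q, n)`:
`c_q(pn) = c_q(n)` if `p ∤ r`, `c_q(pn) = (1 - p) c_q(n)` if `p` divides `r` exactly once, and
`c_q(n) = 0` if `p² ∣ r`. When `pc ∣ N / p`, each `d` prime to `p` is in the last case and
contributes nothing to `a_c(E)`. When `pc ∤ N / p`, the divisors with `p ∣ d` are in the first case
and the others in the second, so the combination `(p - 1) a_c(E) + a_{pc}(E)` multiplies the former
summands by `p` and cancels the latter.
-/

open Finset

/-- `a_c(E) = ∑_{d ∈ E} (φ(N/d)/φ(N/gcd(N,dc))) · μ(N/gcd(N,dc))`. -/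
noncomputable def acSum (N : ℕ) (E : Finset ℕ) (c : ℕ) : ℚ :=
  ∑ d ∈ E, ((Nat.totient (N / d) : ℚ) / (Nat.totient (N / N.gcd (d * c)) : ℚ)) *
    ((ArithmeticFunction.moebius (N / N.gcd (d * c)) : ℤ) : ℚ)

/-- The reduced divisor set `E_p = {d/p : d ∈ E, p ∣ d} ⊆ D(N/p)`. -/
def divReduced (E : Finset ℕ) (p : ℕ) : Finset ℕ :=
  (E.filter (fun d => p ∣ d)).image (fun d => d / p)

lemma div_gcd_mul_left (q m n : ℕ) :
    q / q.gcd (m * n) = q / q.gcd n / (q / q.gcd n).gcd m := by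
  obtain hg | hg := (q.gcd n).eq_zero_or_pos
  · simp [Nat.eq_zero_of_gcd_eq_zero_left hg]
  obtain ⟨r, s, hrs, hq, hn⟩ := Nat.exists_coprime q n
  have hdiv : q / q.gcd n = r := Nat.div_eq_of_eq_mul_left hg hq
  have hgcd : q.gcd (m * n) = r.gcd m * q.gcd n := calc
    q.gcd (m * n) = (r * q.gcd n).gcd (m * s * q.gcd n) := by rw [← hq, mul_assoc, ← hn]
    _ = r.gcd m * q.gcd n := by rw [Nat.gcd_mul_right, hrs.symm.gcd_mul_right_cancel_right]
  rw [hdiv, hgcd, mul_comm, ← Nat.div_div_eq_div_mul, hdiv]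

lemma div_gcd_dvd_of_dvd_mul {q n k : ℕ} (hn : 0 < n) (h : q ∣ n * k) : q / q.gcd n ∣ k :=
  (Nat.div_dvd_iff_dvd_mul (Nat.gcd_dvd_left q n) (Nat.gcd_pos_of_pos_right q hn)).2
    (Nat.dvd_gcd_mul_iff_dvd_mul.2 h)

lemma dvd_div_gcd_of_mul_dvd_mul {k d n q : ℕ} (hn : 0 < n) (hkd : k.Coprime d)
    (h : k * n ∣ d * q) : k ∣ q / q.gcd n := by
  have hq : q ∣ q / q.gcd n * n := by
    conv_lhs => rw [← Nat.div_mul_cancel (Nat.gcd_dvd_left q n)]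
    exact Nat.mul_dvd_mul_left _ (Nat.gcd_dvd_right q n)
  have hkn : k * n ∣ d * (q / q.gcd n) * n := by
    rw [mul_assoc]
    exact h.trans (Nat.mul_dvd_mul_left d hq)
  exact hkd.dvd_of_dvd_mul_left (Nat.dvd_of_mul_dvd_mul_right hn hkn)

/-- The Ramanujan sum `c_q(n) = ∑ ζ ^ n`, over the primitive `q`-th roots of unity `ζ`, encoded by
Hölder's closed form `φ(q) / φ(q / gcd(q, n)) · μ(q / gcd(q, n))`. -/
noncomputable def ramanujanSum (q n : ℕ) : ℚ :=
  (Nat.totient q : ℚ) / (Nat.totient (q / q.gcd n) : ℚ) *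
    ((ArithmeticFunction.moebius (q / q.gcd n) : ℤ) : ℚ)

lemma ramanujanSum_eq_zero {q n : ℕ} (h : ¬ Squarefree (q / q.gcd n)) : ramanujanSum q n = 0 := by
  rw [ramanujanSum, ArithmeticFunction.moebius_eq_zero_of_not_squarefree h, Int.cast_zero, mul_zero]

lemma ramanujanSum_mul_left_of_coprime {q m n : ℕ} (h : (q / q.gcd n).Coprime m) :
    ramanujanSum q (m * n) = ramanujanSum q n := by
  rw [ramanujanSum, div_gcd_mul_left, h.gcd_eq_one, Nat.div_one, ramanujanSum]

lemma ramanujanSum_prime_mul {p q n r : ℕ} (hp : p.Prime) (hr : q / q.gcd n = p * r)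
    (hpr : ¬ p ∣ r) : ramanujanSum q (p * n) = (1 - p) * ramanujanSum q n := by
  have hcop : p.Coprime r := hp.coprime_iff_not_dvd.2 hpr
  have hr_mul : q / q.gcd (p * n) = r := by
    rw [div_gcd_mul_left, hr, Nat.gcd_mul_right_left, Nat.mul_div_cancel_left r hp.pos]
  have hφ : (Nat.totient (p * r) : ℚ) = (p - 1) * Nat.totient r := by
    rw [Nat.totient_mul hcop, Nat.totient_prime hp, Nat.cast_mul, Nat.cast_pred hp.pos]
  have hμ : ArithmeticFunction.moebius (p * r) = -ArithmeticFunction.moebius r := by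
    rw [ArithmeticFunction.isMultiplicative_moebius.map_mul_of_coprime hcop,
      ArithmeticFunction.moebius_apply_prime hp, neg_one_mul]
  have hp1 : (p : ℚ) - 1 ≠ 0 := sub_ne_zero.2 (Nat.cast_ne_one.2 hp.ne_one)
  rw [ramanujanSum, ramanujanSum, hr, hr_mul, hφ, hμ, Int.cast_neg, div_mul_eq_div_div_swap]
  field_simp
  ring

lemma acSum_eq_sum_ramanujanSum {N : ℕ} {E : Finset ℕ} (hE : E ⊆ N.divisors) (c : ℕ) :
    acSum N E c = ∑ d ∈ E, ramanujanSum (N / d) c := by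
  refine sum_congr rfl fun d hd => ?_
  have hdN : N.gcd d = d := Nat.gcd_eq_right (Nat.dvd_of_mem_divisors (hE hd))
  rw [mul_comm d c, div_gcd_mul_left, hdN, ramanujanSum]

lemma divReduced_subset_divisors {N p : ℕ} {E : Finset ℕ} (hE : E ⊆ N.divisors) (hpN : p ∣ N) :
    divReduced E p ⊆ (N / p).divisors := by
  intro e he
  obtain ⟨d, hd, rfl⟩ := mem_image.1 he
  obtain ⟨hdE, hpd⟩ := mem_filter.1 hd
  obtain ⟨hdN, hN⟩ := Nat.mem_divisors.1 (hE hdE)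
  have hNp : N / p ≠ 0 :=
    (Nat.div_ne_zero_iff_of_dvd hpN).2 ⟨hN, ne_zero_of_dvd_ne_zero hN hpN⟩
  exact Nat.mem_divisors.2 ⟨Nat.div_dvd_div hpd hdN, hNp⟩

lemma sum_divReduced {A : Type*} [AddCommMonoid A] (E : Finset ℕ) (p : ℕ) (f : ℕ → A) :
    ∑ e ∈ divReduced E p, f e = ∑ d ∈ E with p ∣ d, f (d / p) := by
  refine sum_image fun a ha b hb hab => ?_
  exact (Nat.div_left_inj (mem_filter.1 ha).2 (mem_filter.1 hb).2).1 hab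

lemma acSum_divReduced {N p : ℕ} {E : Finset ℕ} (hE : E ⊆ N.divisors) (hpN : p ∣ N) (c : ℕ) :
    acSum (N / p) (divReduced E p) c = ∑ d ∈ E with p ∣ d, ramanujanSum (N / d) c := by
  rw [acSum_eq_sum_ramanujanSum (divReduced_subset_divisors hE hpN), sum_divReduced]
  refine sum_congr rfl fun d hd => ?_
  rw [Nat.div_div_eq_div_mul, Nat.mul_div_cancel' (mem_filter.1 hd).2]

section PrimeDivisor

variable {N p c d : ℕ} {E : Finset ℕ}

lemma ramanujanSum_div_eq_zero (hp : p.Prime) (hc : 0 < c) (h : p * p * c ∣ N) (hdN : d ∣ N)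
    (hpd : ¬ p ∣ d) : ramanujanSum (N / d) c = 0 := by
  have hcop : p.Coprime d := hp.coprime_iff_not_dvd.2 hpd
  rw [← Nat.mul_div_cancel' hdN] at h
  have hsq : p * p ∣ N / d / (N / d).gcd c :=
    dvd_div_gcd_of_mul_dvd_mul hc (hcop.mul_left hcop) h
  exact ramanujanSum_eq_zero fun hsf => hp.not_isUnit (hsf p hsq)

lemma ramanujanSum_div_prime_mul_of_dvd (hp : p.Prime) (hc : 0 < c) (hpcN : p * c ∣ N)
    (hppcN : ¬ p * p * c ∣ N) (hdN : d ∣ N) (hpd : p ∣ d) :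
    ramanujanSum (N / d) (p * c) = ramanujanSum (N / d) c := by
  obtain ⟨e, rfl⟩ := hpcN
  obtain ⟨k, rfl⟩ := hpd
  have hpe : ¬ p ∣ e := fun h => hppcN (mul_right_comm p c p ▸ Nat.mul_dvd_mul_left (p * c) h)
  have hq : p * c * e / (p * k) ∣ c * e := by
    rw [mul_assoc] at hdN ⊢
    rw [Nat.mul_div_mul_left _ _ hp.pos]
    exact Nat.div_dvd_of_dvd (Nat.dvd_of_mul_dvd_mul_left hp.pos hdN)
  exact ramanujanSum_mul_left_of_coprime <|
    ((hp.coprime_iff_not_dvd.2 hpe).coprime_dvd_right (div_gcd_dvd_of_dvd_mul hc hq)).symm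

lemma ramanujanSum_div_prime_mul_of_not_dvd (hp : p.Prime) (hc : 0 < c) (hpcN : p * c ∣ N)
    (hppcN : ¬ p * p * c ∣ N) (hdN : d ∣ N) (hpd : ¬ p ∣ d) :
    ramanujanSum (N / d) (p * c) = (1 - p) * ramanujanSum (N / d) c := by
  obtain ⟨r, hr⟩ : p ∣ N / d / (N / d).gcd c :=
    dvd_div_gcd_of_mul_dvd_mul hc (hp.coprime_iff_not_dvd.2 hpd)
      (by rwa [Nat.mul_div_cancel' hdN])
  refine ramanujanSum_prime_mul hp hr fun hpr => hppcN ?_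
  obtain ⟨e, rfl⟩ := hpcN
  have hre : p * r ∣ p * e := by
    rw [← hr]
    refine div_gcd_dvd_of_dvd_mul hc ?_
    rw [mul_left_comm, ← mul_assoc]
    exact Nat.div_dvd_of_dvd hdN
  have hpe : p ∣ e := hpr.trans (Nat.dvd_of_mul_dvd_mul_left hp.pos hre)
  exact mul_right_comm p c p ▸ Nat.mul_dvd_mul_left (p * c) hpe

lemma acSum_divReduced_of_dvd (hE : E ⊆ N.divisors) (hp : p.Prime) (hc : 0 < c)
    (h : p * p * c ∣ N) : acSum (N / p) (divReduced E p) c = acSum N E c := by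
  rw [acSum_divReduced hE ((dvd_mul_right p (p * c)).trans (mul_assoc p p c ▸ h)),
    acSum_eq_sum_ramanujanSum hE]
  refine sum_filter_of_ne fun d hd hne => ?_
  by_contra hpd
  exact hne (ramanujanSum_div_eq_zero hp hc h (Nat.dvd_of_mem_divisors (hE hd)) hpd)

lemma acSum_divReduced_of_not_dvd (hE : E ⊆ N.divisors) (hp : p.Prime) (hc : 0 < c)
    (hpcN : p * c ∣ N) (hppcN : ¬ p * p * c ∣ N) :
    acSum (N / p) (divReduced E p) c = ((p - 1) * acSum N E c + acSum N E (p * c)) / p := by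
  have hp0 : (p : ℚ) ≠ 0 := Nat.cast_ne_zero.2 hp.ne_zero
  rw [eq_div_iff hp0, acSum_divReduced hE (dvd_of_mul_right_dvd hpcN),
    acSum_eq_sum_ramanujanSum hE, acSum_eq_sum_ramanujanSum hE, sum_filter, sum_mul, mul_sum,
    ← sum_add_distrib]
  refine sum_congr rfl fun d hd => ?_
  have hdN : d ∣ N := Nat.dvd_of_mem_divisors (hE hd)
  split_ifs with hpd
  · rw [ramanujanSum_div_prime_mul_of_dvd hp hc hpcN hppcN hdN hpd]
    ring
  · rw [ramanujanSum_div_prime_mul_of_not_dvd hp hc hpcN hppcN hdN hpd]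
    ring

end PrimeDivisor

/-- For a prime `p ∣ N` and `c ∈ D(N/p)` one has `a_c^p(E_p) = a_c(E)` if `pc ∣ N/p`, and
`a_c^p(E_p) = ((p−1)·a_c(E) + a_{pc}(E))/p` otherwise. In particular `a_c(E) ≥ 0` for all
`c ∈ D(N)` implies `a_c^p(E_p) ≥ 0` for all `c ∈ D(N/p)`. -/
theorem acSum_reduced
    (N : ℕ) (hN : 0 < N) (E : Finset ℕ) (hE : E ⊆ N.divisors)
    (p : ℕ) (hp : p.Prime) (hpN : p ∣ N) :
    (∀ c ∈ (N / p).divisors,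
      acSum (N / p) (divReduced E p) c =
        if (p * c) ∣ (N / p) then acSum N E c
        else (((p : ℚ) - 1) * acSum N E c + acSum N E (p * c)) / (p : ℚ)) ∧
    ((∀ c ∈ N.divisors, 0 ≤ acSum N E c) →
      ∀ c ∈ (N / p).divisors, 0 ≤ acSum (N / p) (divReduced E p) c) := by
  have hdvd : ∀ c ∈ (N / p).divisors, p * c ∣ N := fun c hc =>
    (Nat.dvd_div_iff_mul_dvd hpN).1 (Nat.dvd_of_mem_divisors hc)
  have hformula : ∀ c ∈ (N / p).divisors, acSum (N / p) (divReduced E p) c =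
      if (p * c) ∣ (N / p) then acSum N E c
      else (((p : ℚ) - 1) * acSum N E c + acSum N E (p * c)) / (p : ℚ) := by
    intro c hc
    have hc0 : 0 < c := Nat.pos_of_mem_divisors hc
    simp only [Nat.dvd_div_iff_mul_dvd hpN, ← mul_assoc]
    split_ifs with h
    · exact acSum_divReduced_of_dvd hE hp hc0 h
    · exact acSum_divReduced_of_not_dvd hE hp hc0 (hdvd c hc) h
  refine ⟨hformula, fun hnonneg c hc => ?_⟩
  have hac : 0 ≤ acSum N E c :=
    hnonneg c (Nat.mem_divisors.2 ⟨dvd_of_mul_left_dvd (hdvd c hc), hN.ne'⟩)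
  have hapc : 0 ≤ acSum N E (p * c) :=
    hnonneg (p * c) (Nat.mem_divisors.2 ⟨hdvd c hc, hN.ne'⟩)
  have hp1 : (0 : ℚ) ≤ p - 1 := sub_nonneg.2 (Nat.one_le_cast.2 hp.one_le)
  rw [hformula c hc]
  split_ifs <;> positivity
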